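/- Let α ∈ ℝ with sin α ≠ 0 and let n ≥ 0 be an integer. Then for every x ∈ ℝ, F_α h_n(x) = e^{-inα} h_n(x); that is, the n-th Hermite function is an eigenvector of the α-angle fractional Fourier transform with eigenvalue e^{-inα}. -/

import Mathlib

/-!
The creation operator `A = 2x - d/dx` raises Hermite functions, `A hₙ = 2 √(n + 1) hₙ₊₁`, and
commutes with the fractional Fourier transform up to a phase, `F_α A = e^{-iα} A F_α`. Hence each
step up the ladder multiplies the eigenvalue by `e^{-iα}`, starting from the Gaussian `h₀`, which
`F_α` fixes. For the commutation relation, `F_α` is a Fourier transform between two multiplications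
by the chirp `e^{i t² cot α}`, so the rules exchanging differentiation and multiplication by the
variable carry over from the Fourier transform.
-/

open MeasureTheory Complex

/-- The α-angle fractional Fourier transform (for sin α ≠ 0). The square root
`(1 - i cot α) ^ (1/2)` is the principal one, whose argument lies in (-π/2, π/2]. -/
noncomputable def FrFT (α : ℝ) (f : ℝ → ℂ) (x : ℝ) : ℂ :=
  ((1 - Complex.I * Real.cot α) ^ ((1:ℂ)/2) / (Real.sqrt Real.pi : ℂ)) *
    Complex.exp (Complex.I * (x:ℂ)^2 * Real.cot α) *
    ∫ t : ℝ, Complex.exp (-2 * Complex.I * ((x:ℂ) * t * (((Real.sin α)⁻¹ : ℝ) : ℂ)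
      - ((Real.cot α : ℂ) / 2) * (t:ℂ)^2)) * f t

/-- The physicists' Hermite polynomial H_n(x) = (-1)ⁿ e^{x²} (dⁿ/dxⁿ) e^{-x²}. -/
noncomputable def physHermite (n : ℕ) (x : ℝ) : ℝ :=
  (-1)^n * Real.exp (x^2) * deriv^[n] (fun y : ℝ => Real.exp (-y^2)) x

/-- The n-th Hermite function h_n(x) = (2/π)^{1/4} (2ⁿ n!)^{-1/2} e^{-x²} H_n(√2 x). -/
noncomputable def hermiteFun (n : ℕ) (x : ℝ) : ℝ :=
  (2 / Real.pi) ^ ((1:ℝ)/4) * (Real.sqrt (2^n * n.factorial))⁻¹ *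
    Real.exp (-x^2) * physHermite n (Real.sqrt 2 * x)

open scoped FourierTransform

lemma ofReal_div_cpow {r : ℝ} (hr : 0 < r) {z : ℂ} (hz : z ≠ 0) (harg : z.arg ≠ Real.pi) (s : ℂ) :
    ((r : ℂ) / z) ^ s = (r : ℂ) ^ s / z ^ s := by
  have hr' : (r : ℂ) ≠ 0 := ofReal_ne_zero.mpr hr.ne'
  rw [cpow_def_of_ne_zero (div_ne_zero hr' hz), cpow_def_of_ne_zero hr', cpow_def_of_ne_zero hz,
    div_eq_mul_inv, log_ofReal_mul hr (inv_ne_zero hz), log_inv z harg, ofReal_log hr.le,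
    ← Complex.exp_sub]
  ring_nf

lemma ofReal_cpow_one_half {r : ℝ} (hr : 0 ≤ r) : (r : ℂ) ^ ((1 : ℂ) / 2) = (Real.sqrt r : ℂ) := by
  rw [Real.sqrt_eq_rpow, ofReal_cpow hr]
  norm_num

/-- The quadratic phase `e^{i c t²}`; multiplication by it, before and after, turns the Fourier
transform into the fractional one. -/
noncomputable def chirp (c t : ℝ) : ℂ := cexp (I * (t : ℂ) ^ 2 * c)

lemma hasDerivAt_chirp (c t : ℝ) : HasDerivAt (chirp c) (2 * I * c * t * chirp c t) t := by
  have hphase : HasDerivAt (fun t : ℝ => I * (t : ℂ) ^ 2 * c) (I * (2 * t) * c) t := by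
    simpa using ((((hasDerivAt_id t).ofReal_comp).pow 2).const_mul I).mul_const (c : ℂ)
  refine hphase.cexp.congr_deriv ?_
  rw [chirp]
  ring

lemma norm_chirp (c t : ℝ) : ‖chirp c t‖ = 1 := by
  rw [chirp, show I * (t : ℂ) ^ 2 * c = ((t ^ 2 * c : ℝ) : ℂ) * I by push_cast; ring,
    norm_exp_ofReal_mul_I]

lemma integrable_chirp_mul (c : ℝ) {f : ℝ → ℂ} (hf : Integrable f) :
    Integrable fun t => chirp c t * f t :=
  hf.bdd_mul (c := 1) (by unfold chirp; fun_prop)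
    (.of_forall fun t => (norm_chirp c t).le)

section FractionalFourier

variable {α : ℝ} {f g : ℝ → ℂ}

lemma FrFT_eq_fourier (α : ℝ) (f : ℝ → ℂ) (x : ℝ) :
    FrFT α f x = (1 - I * Real.cot α) ^ ((1 : ℂ) / 2) / (Real.sqrt Real.pi : ℂ) *
      (chirp (Real.cot α) x *
        𝓕 (fun t => chirp (Real.cot α) t * f t) ((Real.pi * Real.sin α)⁻¹ * x)) := by
  rw [FrFT, Real.fourier_real_eq_integral_exp_smul, mul_assoc, chirp]
  congr 3
  ext t
  rw [smul_eq_mul, chirp, ← mul_assoc, ← Complex.exp_add]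
  congr 2
  have hpi : (Real.pi : ℂ) ≠ 0 := ofReal_ne_zero.mpr Real.pi_ne_zero
  push_cast
  rw [mul_inv]
  field_simp
  ring

lemma FrFT_const_mul (α : ℝ) (c : ℂ) (f : ℝ → ℂ) (x : ℝ) :
    FrFT α (fun t => c * f t) x = c * FrFT α f x := by
  simp only [FrFT, mul_left_comm _ c, integral_const_mul]

lemma FrFT_sub (hf : Integrable f) (hg : Integrable g) (x : ℝ) :
    FrFT α (fun t => f t - g t) x = FrFT α f x - FrFT α g x := by
  have hconv {h : ℝ → ℂ} (hh : Integrable h) (w : ℝ) :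
      Integrable fun t => Real.fourierChar (-(t * w)) • (chirp (Real.cot α) t * h t) := by
    simpa only [mul_comm] using! (Real.fourierIntegral_convergent_iff w).mpr
      (integrable_chirp_mul (Real.cot α) hh)
  simp only [FrFT_eq_fourier, Real.fourier_real_eq, mul_sub, smul_sub]
  rw [integral_sub (hconv hf _) (hconv hg _)]
  ring

lemma hasDerivAt_FrFT (hf : Integrable f) (htf : Integrable fun t : ℝ => (t : ℂ) * f t) (x : ℝ) :
    HasDerivAt (FrFT α f) (2 * I * Real.cot α * x * FrFT α f x -
      2 * I * (Real.sin α : ℂ)⁻¹ * FrFT α (fun t => t * f t) x) x := by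
  set c := Real.cot α
  set r := (Real.pi * Real.sin α)⁻¹ with hr
  have hcf := integrable_chirp_mul c hf
  have htcf : Integrable fun t : ℝ => t • (chirp c t * f t) := by
    simpa only [real_smul, mul_left_comm] using integrable_chirp_mul c htf
  have hfourier_mul : 𝓕 (fun t : ℝ => (-2 * Real.pi * I * t) • (chirp c t * f t)) (r * x) =
      -2 * Real.pi * I * 𝓕 (fun t : ℝ => chirp c t * (t * f t)) (r * x) := by
    simp only [Real.fourier_real_eq, Circle.smul_def, smul_eq_mul, ← integral_const_mul]
    congr with t
    ring
  have hfourier := (Real.hasDerivAt_fourier hcf htcf (r * x)).scomp x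
    ((hasDerivAt_id x).const_mul r)
  rw [funext (FrFT_eq_fourier α f)]
  refine (((hasDerivAt_chirp c x).mul hfourier).const_mul _).congr_deriv ?_
  have hpi : (Real.pi : ℂ) ≠ 0 := ofReal_ne_zero.mpr Real.pi_ne_zero
  rw [FrFT_eq_fourier, hfourier_mul, real_smul, hr]
  simp only [Function.comp_apply]
  push_cast
  field_simp
  ring

lemma FrFT_deriv (hf : Integrable f) (htf : Integrable fun t : ℝ => (t : ℂ) * f t)
    (hdiff : Differentiable ℝ f) (hf' : Integrable (deriv f)) (x : ℝ) :
    FrFT α (deriv f) x = 2 * I * (Real.sin α : ℂ)⁻¹ * x * FrFT α f x -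
      2 * I * Real.cot α * FrFT α (fun t => t * f t) x := by
  set c := Real.cot α with hc
  -- Chosen so that `chirp c * g` is an exact derivative.
  set g : ℝ → ℂ := fun t => deriv f t + 2 * I * c * (t * f t) with hg
  have hg_int : Integrable g := hf'.add (htf.const_mul _)
  have hderiv (t : ℝ) : HasDerivAt (fun t => chirp c t * f t) (chirp c t * g t) t := by
    refine ((hasDerivAt_chirp c t).mul (hdiff t).hasDerivAt).congr_deriv ?_
    rw [hg]
    ring
  have hderiv_eq : deriv (fun t => chirp c t * f t) = fun t => chirp c t * g t :=
    funext fun t => (hderiv t).deriv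
  have hFrFT_g : FrFT α g x = 2 * I * (Real.sin α : ℂ)⁻¹ * x * FrFT α f x := by
    have hpi : (Real.pi : ℂ) ≠ 0 := ofReal_ne_zero.mpr Real.pi_ne_zero
    rw [FrFT_eq_fourier, FrFT_eq_fourier, ← hc, ← hderiv_eq,
      Real.fourier_deriv (integrable_chirp_mul c hf) (fun t => (hderiv t).differentiableAt)
        (hderiv_eq ▸ integrable_chirp_mul c hg_int)]
    simp only [smul_eq_mul]
    push_cast
    field_simp
  have hsplit : deriv f = fun t => g t - 2 * I * c * (t * f t) := by
    simp only [hg, add_sub_cancel_right]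
  rw [hsplit, FrFT_sub hg_int (htf.const_mul _), hFrFT_g, FrFT_const_mul]

end FractionalFourier

section Creation

variable {α : ℝ} {f : ℝ → ℂ}

/-- The creation operator `2x - d/dx`, in the normalization suited to the ground state `e^{-x²}`. -/
noncomputable def creation (f : ℝ → ℂ) (x : ℝ) : ℂ := 2 * x * f x - deriv f x

lemma creation_const_mul (c : ℂ) (f : ℝ → ℂ) (x : ℝ) :
    creation (fun t => c * f t) x = c * creation f x := by
  simp only [creation, deriv_const_mul_field]
  ring

lemma one_add_I_cot_mul_one_sub_I_cot (hα : Real.sin α ≠ 0) :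
    (1 + I * Real.cot α) * (1 - I * Real.cot α) = (Real.sin α : ℂ)⁻¹ ^ 2 := by
  have hsin : (Real.sin α : ℂ) ≠ 0 := ofReal_ne_zero.mpr hα
  have hsq : (Real.sin α : ℂ) ^ 2 + (Real.cos α : ℂ) ^ 2 = 1 := by
    exact_mod_cast Real.sin_sq_add_cos_sq α
  rw [Real.cot_eq_cos_div_sin, ofReal_div]
  field_simp
  linear_combination hsq - (Real.cos α : ℂ) ^ 2 * I_sq

lemma I_mul_exp_mul_inv_sin (hα : Real.sin α ≠ 0) :
    I * cexp (-(I * α)) * (Real.sin α : ℂ)⁻¹ = 1 + I * Real.cot α := by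
  have hsin : (Real.sin α : ℂ) ≠ 0 := ofReal_ne_zero.mpr hα
  have hexp : cexp (-(I * α)) = Real.cos α - Real.sin α * I := by
    rw [show -(I * (α : ℂ)) = -α * I by ring, exp_mul_I, Complex.cos_neg, Complex.sin_neg,
      ofReal_cos, ofReal_sin]
    ring
  rw [hexp, Real.cot_eq_cos_div_sin, ofReal_div]
  field_simp
  linear_combination -(Real.sin α : ℂ) * I_sq

lemma exp_mul_one_sub_I_cot (hα : Real.sin α ≠ 0) :
    cexp (-(I * α)) * (1 - I * Real.cot α) = -I * (Real.sin α : ℂ)⁻¹ := by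
  refine mul_left_cancel₀ (mul_ne_zero I_ne_zero (inv_ne_zero (ofReal_ne_zero.mpr hα))) ?_
  linear_combination (1 - I * Real.cot α) * I_mul_exp_mul_inv_sin hα +
    one_add_I_cot_mul_one_sub_I_cot hα + (Real.sin α : ℂ)⁻¹ ^ 2 * I_sq

theorem FrFT_creation (hα : Real.sin α ≠ 0) (hf : Integrable f)
    (htf : Integrable fun t : ℝ => (t : ℂ) * f t) (hdiff : Differentiable ℝ f)
    (hf' : Integrable (deriv f)) (x : ℝ) :
    FrFT α (creation f) x = cexp (-(I * α)) * creation (FrFT α f) x := by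
  have hcreation : creation f = fun t : ℝ => 2 * (t * f t) - deriv f t :=
    funext fun t => by rw [creation, mul_assoc]
  rw [hcreation, FrFT_sub (htf.const_mul 2) hf', FrFT_const_mul, FrFT_deriv hf htf hdiff hf',
    creation, (hasDerivAt_FrFT hf htf x).deriv]
  linear_combination -2 * FrFT α (fun t => t * f t) x * I_mul_exp_mul_inv_sin hα -
    2 * x * FrFT α f x * exp_mul_one_sub_I_cot hα

end Creation

lemma FrFT_gaussian {α : ℝ} (hα : Real.sin α ≠ 0) (x : ℝ) :
    FrFT α (fun t => cexp (-(t : ℂ) ^ 2)) x = cexp (-(x : ℂ) ^ 2) := by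
  set b : ℂ := 1 - I * Real.cot α with hb
  have hb_re : b.re = 1 := by simp [hb, -ofReal_cot]
  have hb_ne : b ≠ 0 := fun h => by simp [h] at hb_re
  have hb_arg : b.arg ≠ Real.pi := fun h => by linarith [(arg_eq_pi_iff.mp h).1]
  have hintegral : ∫ t : ℝ, cexp (-2 * I * (x * t * ((Real.sin α)⁻¹ : ℝ) -
      (Real.cot α / 2 : ℂ) * (t : ℂ) ^ 2)) * cexp (-(t : ℂ) ^ 2) =
      (Real.pi / b) ^ ((1 : ℂ) / 2) * cexp (-(x : ℂ) ^ 2 * (1 + I * Real.cot α)) := by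
    have hexponent : -(x : ℂ) ^ 2 * (1 + I * Real.cot α) =
        -(-2 * x * (Real.sin α : ℂ)⁻¹) ^ 2 / (4 * b) := by
      field_simp
      linear_combination -4 * (x : ℂ) ^ 2 * one_add_I_cot_mul_one_sub_I_cot hα
    rw [hexponent, ← fourierIntegral_gaussian (by rw [hb_re]; exact one_pos)]
    congr with t
    rw [← Complex.exp_add, ← Complex.exp_add, hb]
    push_cast
    ring_nf
  have hsqrt_pi : (Real.sqrt Real.pi : ℂ) ≠ 0 :=
    ofReal_ne_zero.mpr (Real.sqrt_ne_zero'.mpr Real.pi_pos)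
  have hb_cpow : b ^ ((1 : ℂ) / 2) ≠ 0 := by simp [cpow_eq_zero_iff, hb_ne]
  rw [FrFT, hintegral, ← hb, ofReal_div_cpow Real.pi_pos hb_ne hb_arg,
    ofReal_cpow_one_half Real.pi_pos.le]
  field_simp
  rw [← Complex.exp_add]
  ring_nf

lemma integrable_eval_mul_exp_neg_mul_sq {b : ℝ} (hb : 0 < b) (p : Polynomial ℝ) :
    Integrable fun t => p.eval t * Real.exp (-b * t ^ 2) := by
  induction p using Polynomial.induction_on' with
  | add p q hp hq => simpa only [Polynomial.eval_add, add_mul] using! hp.add hq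
  | monomial n a =>
    have hn : (-1 : ℝ) < n := by linarith [n.cast_nonneg (α := ℝ)]
    simpa only [Polynomial.eval_monomial, Real.rpow_natCast, mul_assoc] using
      (integrable_rpow_mul_exp_neg_mul_sq hb hn).const_mul a

lemma hasDerivAt_physHermite (n : ℕ) (x : ℝ) :
    HasDerivAt (physHermite n) (2 * x * physHermite n x - physHermite (n + 1) x) x := by
  set D : ℕ → ℝ → ℝ := fun k => deriv^[k] fun y => Real.exp (-y ^ 2) with hD
  have hsmooth : ContDiff ℝ (⊤ : ℕ∞) (D n) := ContDiff.iterate_deriv n (by fun_prop)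
  have hD_deriv : HasDerivAt (D n) (D (n + 1) x) x := by
    simp only [hD, Function.iterate_succ_apply']
    exact (hsmooth.differentiable (by simp) x).hasDerivAt
  have hexp : HasDerivAt (fun y : ℝ => Real.exp (y ^ 2)) (Real.exp (x ^ 2) * (2 * x)) x := by
    simpa using (hasDerivAt_pow 2 x).exp
  refine ((hexp.const_mul ((-1) ^ n)).mul hD_deriv).congr_deriv ?_
  simp only [physHermite, hD]
  ring

lemma exists_physHermite_eq_eval (n : ℕ) :
    ∃ p : Polynomial ℝ, physHermite n = fun x => p.eval x := by
  induction n with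
  | zero =>
    refine ⟨1, funext fun x => ?_⟩
    simp [physHermite, ← Real.exp_add]
  | succ n ih =>
    obtain ⟨p, hp⟩ := ih
    refine ⟨2 * .X * p - p.derivative, funext fun x => ?_⟩
    have hderiv := (hp ▸ hasDerivAt_physHermite n x).unique (p.hasDerivAt x)
    simp only [Polynomial.eval_sub, Polynomial.eval_mul, Polynomial.eval_X, Polynomial.eval_ofNat]
    linear_combination -hderiv

lemma exists_hermiteFun_eq_eval_mul_exp (n : ℕ) :
    ∃ p : Polynomial ℝ, hermiteFun n = fun x => p.eval x * Real.exp (-1 * x ^ 2) := by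
  obtain ⟨p, hp⟩ := exists_physHermite_eq_eval n
  refine ⟨.C ((2 / Real.pi) ^ ((1 : ℝ) / 4) * (Real.sqrt (2 ^ n * n.factorial))⁻¹) *
    p.comp (.C (Real.sqrt 2) * .X), funext fun x => ?_⟩
  simp only [hermiteFun, hp, Polynomial.eval_mul, Polynomial.eval_C, Polynomial.eval_comp,
    Polynomial.eval_X, neg_one_mul]
  ring

lemma integrable_hermiteFun (n : ℕ) : Integrable (hermiteFun n) := by
  obtain ⟨p, hp⟩ := exists_hermiteFun_eq_eval_mul_exp n
  exact hp ▸ integrable_eval_mul_exp_neg_mul_sq one_pos p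

lemma integrable_mul_hermiteFun (n : ℕ) : Integrable fun x => x * hermiteFun n x := by
  obtain ⟨p, hp⟩ := exists_hermiteFun_eq_eval_mul_exp n
  simpa only [hp, Polynomial.eval_mul, Polynomial.eval_X, mul_assoc] using
    integrable_eval_mul_exp_neg_mul_sq one_pos (.X * p)

lemma sqrt_two_pow_succ_mul_factorial_succ (n : ℕ) :
    Real.sqrt (2 ^ (n + 1) * (n + 1).factorial) =
      Real.sqrt 2 * Real.sqrt (n + 1) * Real.sqrt (2 ^ n * n.factorial) := by
  rw [← Real.sqrt_mul (by positivity), ← Real.sqrt_mul (by positivity), Nat.factorial_succ]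
  push_cast
  ring_nf

lemma hasDerivAt_hermiteFun (n : ℕ) (x : ℝ) :
    HasDerivAt (hermiteFun n)
      (2 * x * hermiteFun n x - 2 * Real.sqrt (n + 1) * hermiteFun (n + 1) x) x := by
  have hexp : HasDerivAt (fun y : ℝ => Real.exp (-y ^ 2)) (Real.exp (-x ^ 2) * -(2 * x)) x := by
    simpa using (hasDerivAt_pow 2 x).neg.exp
  have hscaled := (hasDerivAt_physHermite n (Real.sqrt 2 * x)).comp x
    ((hasDerivAt_id x).const_mul (Real.sqrt 2))
  refine ((hexp.const_mul _).mul hscaled).congr_deriv ?_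
  have hsqrt : Real.sqrt 2 ^ 2 = 2 := Real.sq_sqrt zero_le_two
  have hsqrt_succ : Real.sqrt (n + 1) ≠ 0 := (Real.sqrt_pos.mpr (by positivity)).ne'
  simp only [hermiteFun, sqrt_two_pow_succ_mul_factorial_succ, mul_inv, Function.comp_apply]
  field_simp
  linear_combination (2 * x * Real.sqrt 2 * physHermite n (x * Real.sqrt 2) -
    physHermite (n + 1) (x * Real.sqrt 2)) * hsqrt

lemma hermiteFun_succ_eq_creation (n : ℕ) (x : ℝ) :
    (hermiteFun (n + 1) x : ℂ) =
      (2 * Real.sqrt (n + 1) : ℂ)⁻¹ * creation (fun t => hermiteFun n t) x := by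
  have hsqrt : (Real.sqrt (n + 1) : ℂ) ≠ 0 :=
    ofReal_ne_zero.mpr (Real.sqrt_pos.mpr (by positivity)).ne'
  rw [creation, (hasDerivAt_hermiteFun n x).ofReal_comp.deriv]
  push_cast
  field_simp
  ring

lemma hermiteFun_zero (x : ℝ) :
    hermiteFun 0 x = (2 / Real.pi) ^ ((1 : ℝ) / 4) * Real.exp (-x ^ 2) := by
  simp [hermiteFun, physHermite, ← Real.exp_add]

lemma FrFT_creation_hermiteFun {α : ℝ} (hα : Real.sin α ≠ 0) (n : ℕ) (x : ℝ) :
    FrFT α (creation fun t => hermiteFun n t) x =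
      cexp (-(I * α)) * creation (FrFT α fun t => hermiteFun n t) x := by
  have hderiv : deriv (fun t => (hermiteFun n t : ℂ)) = fun t : ℝ =>
      ((2 * (t * hermiteFun n t) - 2 * Real.sqrt (n + 1) * hermiteFun (n + 1) t : ℝ) : ℂ) :=
    funext fun t => by rw [(hasDerivAt_hermiteFun n t).ofReal_comp.deriv, mul_assoc 2 t]
  refine FrFT_creation (f := fun t => (hermiteFun n t : ℂ)) hα (integrable_hermiteFun n).ofReal ?_
    (fun t => (hasDerivAt_hermiteFun n t).ofReal_comp.differentiableAt) ?_ x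
  · have hmul : Integrable fun t => ((t * hermiteFun n t : ℝ) : ℂ) :=
      (integrable_mul_hermiteFun n).ofReal
    simpa only [ofReal_mul] using hmul
  · rw [hderiv]
    exact (((integrable_mul_hermiteFun n).const_mul 2).sub
      ((integrable_hermiteFun (n + 1)).const_mul _)).ofReal

/-- The n-th Hermite function is an eigenvector of F_α with eigenvalue e^{-inα}. -/
theorem frft_hermite_eigen (α : ℝ) (hα : Real.sin α ≠ 0) (n : ℕ) (x : ℝ) :
    FrFT α (fun t => ((hermiteFun n t : ℝ) : ℂ)) x =
      Complex.exp (-(Complex.I * n * α)) * ((hermiteFun n x : ℝ) : ℂ) := by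
  induction n generalizing x with
  | zero =>
    simp only [hermiteFun_zero, ofReal_mul, ofReal_exp, ofReal_neg, ofReal_pow, FrFT_const_mul,
      FrFT_gaussian hα]
    simp
  | succ n ih =>
    have hphase : cexp (-(I * (n + 1 : ℕ) * α)) = cexp (-(I * α)) * cexp (-(I * n * α)) := by
      rw [← Complex.exp_add]
      push_cast
      ring_nf
    have hladder : FrFT α (creation fun t => hermiteFun n t) x =
        cexp (-(I * α)) * (cexp (-(I * n * α)) * creation (fun t => hermiteFun n t) x) := by
      rw [FrFT_creation_hermiteFun hα, funext ih, creation_const_mul]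
    simp only [hermiteFun_succ_eq_creation, FrFT_const_mul, hladder, hphase]
    ring
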